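/- Let SO(3) be the group of 3×3 real special orthogonal matrices, let d(g,h) = arccos((tr(g h⁻¹) − 1)/2) be the bi-invariant distance, let e be the identity matrix, and define the Brownian kernel K(g,h) = (1/2)(d(g,e) + d(h,e) − d(g,h)). Then K is NOT a positive definite kernel on SO(3): there exist n, elements g₁,…,gₙ ∈ SO(3) and ξ₁,…,ξₙ ∈ ℂ such that the real part of ∑_{i,j} K(gᵢ,gⱼ) ξᵢ conj(ξⱼ) is strictly negative. In particular there exists no centered Gaussian process (Lévy Brownian motion) X indexed by SO(3) with X_e = 0 and E|X_g − X_h|² = d(g,h). -/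

import Mathlib

/-- `SO(n)` as found in Mathlib is only a submonoid of the matrices; we endow it with its
natural group structure (the inverse being the transpose). -/
noncomputable instance instGroupSO (n : ℕ) : Group (Matrix.specialOrthogonalGroup (Fin n) ℝ) :=
  { (inferInstance : Monoid (Matrix.specialOrthogonalGroup (Fin n) ℝ)) with
    inv := fun g => ⟨star g.1, by
      rw [Matrix.mem_specialUnitaryGroup_iff]
      refine ⟨Unitary.star_mem g.2.1, ?_⟩
      have hdet : (g.1).det = 1 := g.2.2
      simp [Matrix.star_eq_conjTranspose, Matrix.det_conjTranspose, hdet]⟩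
    inv_mul_cancel := fun g => by
      apply Subtype.ext
      exact (Unitary.mem_iff.mp g.2.1).1 }

/-- `SO(n)` is a topological group. -/
instance instTopGroupSO (n : ℕ) : IsTopologicalGroup (Matrix.specialOrthogonalGroup (Fin n) ℝ) where
  continuous_mul := by
    apply Continuous.subtype_mk
    exact (continuous_mul.comp ((continuous_subtype_val.comp continuous_fst).prodMk
      (continuous_subtype_val.comp continuous_snd)))
  continuous_inv := by
    apply Continuous.subtype_mk
    exact continuous_star.comp continuous_subtype_val

/-- The bi-invariant Riemannian distance on `SO(3)`: the rotation angle of `g h⁻¹`. -/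
noncomputable def dSO3 (g h : Matrix.specialOrthogonalGroup (Fin 3) ℝ) : ℝ :=
  Real.arccos ((Matrix.trace ((g * h⁻¹ : Matrix.specialOrthogonalGroup (Fin 3) ℝ) :
    Matrix (Fin 3) (Fin 3) ℝ) - 1) / 2)

/-!
Either a positive definite Brownian kernel or a process with increments of variance `d` would make
`d` of negative type. Comparing two families `a`, `b` of equal size with weights `1` and `-1`, this
forces the sum of the distances within `a` and within `b` to be at most twice the sum of the
distances between them. Two cosets of the Klein four-group in the rotation group of the tetrahedron
violate this: distinct elements of a coset differ by a half-turn, elements of different cosets by a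
rotation of angle `2π/3`, and `2 · 12 · π = 24π` exceeds `2 · 16 · 2π/3 = 64π/3`.
-/

section NegativeType

open MeasureTheory

variable {T : Type*}

/-- Positive definite kernels, with complex coefficients: only the real part of the quadratic form
is required to be nonnegative. -/
def IsPositiveDefiniteKernel (K : T → T → ℝ) : Prop :=
  ∀ (n : ℕ) (x : Fin n → T) (ξ : Fin n → ℂ),
    0 ≤ (∑ i, ∑ j, (K (x i) (x j) : ℂ) * ξ i * (starRingEnd ℂ) (ξ j)).re

/-- The Brownian kernel of `d` based at `o`: the covariance of a process that vanishes at `o` and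
whose increments have variance `d`. -/
noncomputable def brownianKernel (d : T → T → ℝ) (o x y : T) : ℝ :=
  (d x o + d y o - d x y) / 2

/-- Functions of negative type (conditionally negative definite kernels): the quadratic form is
nonpositive on the real coefficient families with sum zero. Symmetry and vanishing on the diagonal
are not part of the definition. -/
def IsOfNegativeType (d : T → T → ℝ) : Prop :=
  ∀ (n : ℕ) (x : Fin n → T) (c : Fin n → ℝ), ∑ i, c i = 0 →
    ∑ i, ∑ j, c i * c j * d (x i) (x j) ≤ 0

theorem sum_mul_brownianKernel_of_sum_eq_zero {ι : Type*} [Fintype ι] (d : T → T → ℝ) (o : T)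
    (x : ι → T) {c : ι → ℝ} (hc : ∑ i, c i = 0) :
    ∑ i, ∑ j, c i * c j * brownianKernel d o (x i) (x j) =
      -(∑ i, ∑ j, c i * c j * d (x i) (x j)) / 2 := by
  have split_summand (i j : ι) : c i * c j * brownianKernel d o (x i) (x j) =
      c i * d (x i) o / 2 * c j + c i * (c j * d (x j) o / 2) -
        c i * c j * d (x i) (x j) / 2 := by
    unfold brownianKernel
    ring
  simp only [split_summand, Finset.sum_sub_distrib, Finset.sum_add_distrib, ← Finset.mul_sum,
    ← Finset.sum_mul, hc, ← Finset.sum_div]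
  ring

theorem IsPositiveDefiniteKernel.isOfNegativeType {d : T → T → ℝ} {o : T}
    (hK : IsPositiveDefiniteKernel (brownianKernel d o)) : IsOfNegativeType d := by
  intro n x c hc
  have form_eq : (∑ i, ∑ j, (brownianKernel d o (x i) (x j) : ℂ) * (c i : ℂ) *
      (starRingEnd ℂ) (c j : ℂ)).re = ∑ i, ∑ j, c i * c j * brownianKernel d o (x i) (x j) := by
    simp only [Complex.conj_ofReal, ← Complex.ofReal_mul, ← Complex.ofReal_sum, Complex.ofReal_re]
    exact Finset.sum_congr rfl fun i _ ↦ Finset.sum_congr rfl fun j _ ↦ by ring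
  have form_nonneg := hK n x fun i ↦ c i
  rw [form_eq, sum_mul_brownianKernel_of_sum_eq_zero d o x hc] at form_nonneg
  linarith

theorem isOfNegativeType_norm_sub_sq {E : Type*} [SeminormedAddCommGroup E]
    [InnerProductSpace ℝ E] (f : T → E) : IsOfNegativeType fun s t ↦ ‖f s - f t‖ ^ 2 := by
  intro n x c hc
  have norm_sq_eq := inner_sum_smul_sum_smul_of_sum_eq_zero (f ∘ x) hc (f ∘ x) hc
  rw [real_inner_self_eq_norm_sq] at norm_sq_eq
  simp only [Function.comp_apply, ← sq] at norm_sq_eq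
  linarith [sq_nonneg ‖∑ i, c i • f (x i)‖]

theorem isOfNegativeType_integral {Ω : Type*} [MeasurableSpace Ω] {μ : Measure Ω}
    {d : Ω → T → T → ℝ} (hint : ∀ s t, Integrable (fun ω ↦ d ω s t) μ)
    (hd : ∀ᵐ ω ∂μ, IsOfNegativeType (d ω)) :
    IsOfNegativeType fun s t ↦ ∫ ω, d ω s t ∂μ := by
  intro n x c hc
  have integral_form : ∫ ω, ∑ i, ∑ j, c i * c j * d ω (x i) (x j) ∂μ =
      ∑ i, ∑ j, c i * c j * ∫ ω, d ω (x i) (x j) ∂μ := by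
    have hint_mul (i j) := (hint (x i) (x j)).const_mul (c i * c j)
    rw [integral_finsetSum _ fun i _ ↦ integrable_finsetSum _ fun j _ ↦ hint_mul i j]
    refine Finset.sum_congr rfl fun i _ ↦ ?_
    rw [integral_finsetSum _ fun j _ ↦ hint_mul i j]
    simp only [integral_const_mul]
  rw [← integral_form]
  exact integral_nonpos_of_ae (hd.mono fun ω hω ↦ hω n x c hc)

theorem isOfNegativeType_of_integral_norm_sub_sq_eq {Ω E : Type*} [MeasurableSpace Ω]
    [SeminormedAddCommGroup E] [InnerProductSpace ℝ E] {μ : Measure Ω} {d : T → T → ℝ}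
    {X : T → Ω → E} (hd : ∀ s t, d s t = 0 → s = t)
    (hX : ∀ s t, ∫ ω, ‖X s ω - X t ω‖ ^ 2 ∂μ = d s t) : IsOfNegativeType d := by
  have integrable_norm_sub_sq (s t : T) : Integrable (fun ω ↦ ‖X s ω - X t ω‖ ^ 2) μ := by
    rcases eq_or_ne s t with rfl | hst
    · simp
    · -- The integral of a non-integrable function is `0`.
      exact .of_integral_ne_zero (hX s t ▸ mt (hd s t) hst)
  simpa only [hX] using
    isOfNegativeType_integral integrable_norm_sub_sq <|
      .of_forall fun ω ↦ isOfNegativeType_norm_sub_sq fun t ↦ X t ω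

theorem IsOfNegativeType.sum_nonpos {ι : Type*} [Fintype ι] {d : T → T → ℝ}
    (hd : IsOfNegativeType d) (x : ι → T) {c : ι → ℝ} (hc : ∑ i, c i = 0) :
    ∑ i, ∑ j, c i * c j * d (x i) (x j) ≤ 0 := by
  let e := (Fintype.equivFin ι).symm
  calc ∑ i, ∑ j, c i * c j * d (x i) (x j)
      = ∑ k, ∑ l, c (e k) * c (e l) * d (x (e k)) (x (e l)) := by
        rw [← e.sum_comp]
        exact Finset.sum_congr rfl fun k _ ↦ (e.sum_comp _).symm
    _ ≤ 0 := hd _ (x ∘ e) (c ∘ e) ((e.sum_comp c).trans hc)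

theorem IsOfNegativeType.sum_add_sum_le_sum_add_sum {ι : Type*} [Fintype ι] {d : T → T → ℝ}
    (hd : IsOfNegativeType d) (a b : ι → T) :
    (∑ i, ∑ j, d (a i) (a j)) + ∑ i, ∑ j, d (b i) (b j) ≤
      (∑ i, ∑ j, d (a i) (b j)) + ∑ i, ∑ j, d (b i) (a j) := by
  have signed_sum := hd.sum_nonpos (Sum.elim a b) (c := Sum.elim (fun _ ↦ 1) (fun _ ↦ -1)) (by simp)
  simp only [Fintype.sum_sum_type, Sum.elim_inl, Sum.elim_inr, Finset.sum_add_distrib, one_mul,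
    mul_one, neg_mul, mul_neg, Finset.sum_neg_distrib] at signed_sum
  linarith

end NegativeType

section RotationAngle

open Matrix

variable (g h k : specialOrthogonalGroup (Fin 3) ℝ)

theorem eq_one_of_transpose_mul_self_eq_one_of_card_le_trace {n : Type*} [Fintype n] [DecidableEq n]
    {A : Matrix n n ℝ} (hA : Aᵀ * A = 1) (htr : (Fintype.card n : ℝ) ≤ A.trace) : A = 1 := by
  have trace_eq : ((A - 1)ᴴ * (A - 1)).trace = 2 * (Fintype.card n - A.trace) := by
    simp only [conjTranspose_eq_transpose_of_trivial, transpose_sub, transpose_one, sub_mul,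
      mul_sub, hA, mul_one, one_mul, trace_sub, trace_one, trace_transpose]
    ring
  have trace_nonneg := (posSemidef_conjTranspose_mul_self (A - 1)).trace_nonneg
  have trace_zero : ((A - 1)ᴴ * (A - 1)).trace = 0 := by linarith
  exact sub_eq_zero.mp (trace_conjTranspose_mul_self_eq_zero_iff.mp trace_zero)

theorem dSO3_eq_arccos : dSO3 g h = Real.arccos (((g.1 * h.1ᵀ).trace - 1) / 2) :=
  rfl

theorem dSO3_comm : dSO3 g h = dSO3 h g := by
  rw [dSO3_eq_arccos, dSO3_eq_arccos, ← trace_transpose, transpose_mul, transpose_transpose]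

theorem dSO3_mul_right : dSO3 (g * k) (h * k) = dSO3 g h := by
  simp only [dSO3, ← div_eq_mul_inv, mul_div_mul_right_eq_div]

variable {g h} in
theorem eq_of_dSO3_eq_zero (hgh : dSO3 g h = 0) : g = h := by
  have three_le_trace : 3 ≤ (g * h⁻¹).1.trace := by
    linarith [Real.arccos_eq_zero.mp hgh]
  have coe_eq_one := eq_one_of_transpose_mul_self_eq_one_of_card_le_trace
    ((mem_orthogonalGroup_iff' _ _).mp (g * h⁻¹).2.1) (by simpa using three_le_trace)
  exact mul_inv_eq_one.mp (Subtype.ext coe_eq_one)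

end RotationAngle

section TetrahedralRotations

open Matrix

/-- The Klein four-group of rotations `diag(s, t, st)` with `s, t = ±1`: the identity and the
half-turns about the coordinate axes. -/
def kleinRotation (u : ℤˣ × ℤˣ) : specialOrthogonalGroup (Fin 3) ℝ :=
  ⟨diagonal ![(u.1 : ℝ), (u.2 : ℝ), (u.1 * u.2 : ℝ)], by
    obtain ⟨s, t⟩ := u
    rw [mem_specialOrthogonalGroup_iff, mem_orthogonalGroup_iff, diagonal_transpose,
      diagonal_mul_diagonal, det_diagonal, Fin.prod_univ_three]
    rcases Int.units_eq_one_or s with rfl | rfl <;> rcases Int.units_eq_one_or t with rfl | rfl <;>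
      simp [← Matrix.ext_iff, Fin.forall_fin_succ]⟩

/-- The cyclic permutation of the coordinates: a rotation of angle `2π/3` about `(1, 1, 1)`. -/
def cyclicRotation : specialOrthogonalGroup (Fin 3) ℝ :=
  ⟨!![0, 1, 0; 0, 0, 1; 1, 0, 0], by
    rw [mem_specialOrthogonalGroup_iff, mem_orthogonalGroup_iff, det_fin_three]
    simp [← Matrix.ext_iff, Fin.forall_fin_succ, vecMul, dotProduct, Fin.sum_univ_three]⟩

theorem trace_kleinRotation_mul_transpose (u v : ℤˣ × ℤˣ) :
    ((kleinRotation u).1 * (kleinRotation v).1ᵀ).trace = if u = v then 3 else -1 := by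
  obtain ⟨s, t⟩ := u
  obtain ⟨s', t'⟩ := v
  have trace_eq : ((kleinRotation (s, t)).1 * (kleinRotation (s', t')).1ᵀ).trace =
      s * s' + t * t' + s * t * (s' * t') := by
    simp [kleinRotation, Fin.sum_univ_three]
  rw [trace_eq]
  rcases Int.units_eq_one_or s with rfl | rfl <;> rcases Int.units_eq_one_or t with rfl | rfl <;>
    rcases Int.units_eq_one_or s' with rfl | rfl <;>
    rcases Int.units_eq_one_or t' with rfl | rfl <;> norm_num

theorem dSO3_kleinRotation (u v : ℤˣ × ℤˣ) :
    dSO3 (kleinRotation u) (kleinRotation v) = if u = v then 0 else Real.pi := by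
  rw [dSO3_eq_arccos, trace_kleinRotation_mul_transpose]
  split_ifs <;> norm_num

theorem trace_kleinRotation_mul_cyclicRotation_mul_transpose (u v : ℤˣ × ℤˣ) :
    ((kleinRotation u * cyclicRotation).1 * (kleinRotation v).1ᵀ).trace = 0 := by
  simp [kleinRotation, cyclicRotation, trace_fin_three]

theorem dSO3_kleinRotation_mul_cyclicRotation (u v : ℤˣ × ℤˣ) :
    dSO3 (kleinRotation u * cyclicRotation) (kleinRotation v) = 2 * Real.pi / 3 := by
  rw [dSO3_eq_arccos, trace_kleinRotation_mul_cyclicRotation_mul_transpose]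
  refine Real.arccos_eq_of_eq_cos (by positivity) (by linarith [Real.pi_pos]) ?_
  rw [show 2 * Real.pi / 3 = Real.pi - Real.pi / 3 by ring, Real.cos_pi_sub, Real.cos_pi_div_three]
  norm_num

theorem sum_dSO3_kleinRotation :
    ∑ u, ∑ v, dSO3 (kleinRotation u) (kleinRotation v) = 12 * Real.pi := by
  have sum_row (u : ℤˣ × ℤˣ) :
      ∑ v, dSO3 (kleinRotation u) (kleinRotation v) = 3 * Real.pi := by
    simp [dSO3_kleinRotation, Finset.sum_ite, Finset.filter_ne]
  simp only [sum_row, Finset.sum_const, Finset.card_univ, Fintype.card_prod,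
    Fintype.card_units_int, nsmul_eq_mul]
  ring

theorem not_isOfNegativeType_dSO3 : ¬ IsOfNegativeType dSO3 := by
  intro hd
  have coset_inequality := hd.sum_add_sum_le_sum_add_sum kleinRotation
    fun u ↦ kleinRotation u * cyclicRotation
  simp only [dSO3_mul_right, dSO3_comm (kleinRotation _) (kleinRotation _ * cyclicRotation),
    dSO3_kleinRotation_mul_cyclicRotation, sum_dSO3_kleinRotation, Finset.sum_const,
    Finset.card_univ, Fintype.card_prod, Fintype.card_units_int, nsmul_eq_mul] at coset_inequality
  push_cast at coset_inequality
  linarith [Real.pi_pos]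

end TetrahedralRotations

open MeasureTheory in
theorem SO3_brownian_kernel_not_posdef_general :
    (∀ o, ¬ IsPositiveDefiniteKernel (brownianKernel dSO3 o)) ∧
    ∀ {Ω E : Type*} [MeasurableSpace Ω] [SeminormedAddCommGroup E] [InnerProductSpace ℝ E]
      (μ : Measure Ω) (X : Matrix.specialOrthogonalGroup (Fin 3) ℝ → Ω → E),
      ¬ ∀ g h, ∫ ω, ‖X g ω - X h ω‖ ^ 2 ∂μ = dSO3 g h :=
  ⟨fun _ hK ↦ not_isOfNegativeType_dSO3 hK.isOfNegativeType, fun _ _ hX ↦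
    not_isOfNegativeType_dSO3 <|
      isOfNegativeType_of_integral_norm_sub_sq_eq (fun _ _ ↦ eq_of_dSO3_eq_zero) hX⟩

open MeasureTheory Finset in
/-- The Brownian kernel `K(g,h) = (d(g,e) + d(h,e) - d(g,h))/2` on `SO(3)` is NOT positive
definite; in particular there exists no centered Gaussian process (Lévy's Brownian motion)
`X` indexed by `SO(3)` with `X_e = 0` and `E|X_g - X_h|² = d(g,h)`. -/
theorem SO3_brownian_kernel_not_posdef :
    (∃ (n : ℕ) (g : Fin n → Matrix.specialOrthogonalGroup (Fin 3) ℝ) (ξ : Fin n → ℂ),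
      (∑ i, ∑ j,
        (((dSO3 (g i) 1 + dSO3 (g j) 1 - dSO3 (g i) (g j)) / 2 : ℝ) : ℂ)
          * ξ i * (starRingEnd ℂ) (ξ j)).re < 0) ∧
    ¬ ∃ (Ω : Type) (_ : MeasurableSpace Ω) (P : Measure Ω)
        (_ : IsProbabilityMeasure P)
        (X : Matrix.specialOrthogonalGroup (Fin 3) ℝ → Ω → ℝ),
      (∀ g, AEMeasurable (X g) P) ∧
      -- `X` is a Gaussian process: every finite linear combination is Gaussian
      (∀ (n : ℕ) (g : Fin n → Matrix.specialOrthogonalGroup (Fin 3) ℝ) (c : Fin n → ℝ),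
        ∃ (m : ℝ) (v : NNReal),
          Measure.map (fun ω => ∑ i, c i * X (g i) ω) P = ProbabilityTheory.gaussianReal m v) ∧
      -- centered
      (∀ g, ∫ ω, X g ω ∂P = 0) ∧
      -- vanishing at the identity
      (∀ ω, X 1 ω = 0) ∧
      -- Lévy's Brownian motion property
      (∀ g h, ∫ ω, (X g ω - X h ω) ^ 2 ∂P = dSO3 g h) := by
  obtain ⟨h_kernel, h_process⟩ := SO3_brownian_kernel_not_posdef_general.{0, 0}
  refine ⟨?_, fun ⟨_, _, P, _, X, _, _, _, _, hX⟩ ↦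
    h_process P X (by simpa only [Real.norm_eq_abs, sq_abs] using hX)⟩
  simpa only [IsPositiveDefiniteKernel, brownianKernel, not_forall, not_le] using h_kernel 1
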